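/- arXiv:2505.18043 — 15 statements merged into one kernel-verified Lean document; each statement's English description precedes it below -/
import Mathlib

section
/- Let H be an edge-colored weighted hypergraph with budgets b_v ∈ ℤ_{≥1} (v ∈ V). Suppose (α, β) is dual feasible for Local ECC, that α_v ≤ (1/(b_v + 1)) · Σ_{e ∈ δ(v)} β_{e,v} for every v ∈ V, and that σ is a feasible multi-coloring for Local ECC such that every edge that is a mistake under σ is tight. Then the cost of σ is at most (1 + max_{v ∈ V} b_v) times the cost of σ', for every multi-coloring σ' that is feasible for Local ECC. (Performance guarantee of the primal-dual algorithm for Local ECC: its output is a (b+1)-approximation when all budgets equal b.) -/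
/-!
Write `B v = ∑ e ∈ δ(v), β e v`. Tightness of the mistakes of `σ` and double counting give
`cost σ ≤ ∑ v, B v`. For a feasible `σ'` weak duality holds: at each `v`, the edges whose color
lies in `σ' v` carry at most `b v * α v` of `B v` (`sum_colored_le`), and every other edge at `v`
is a mistake of `σ'`, so `∑ v, (B v - b v * α v) ≤ cost σ'`. By the bound on `α`,
`B v ≤ (b v + 1) * (B v - b v * α v)`, and `b v` is at most the maximal budget.
-/

lemma sum_edges_comm {V E : Type*} [Fintype V] [DecidableEq V]
    (ed : E → Finset V) (β : E → V → ℝ) (S : Finset E) :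
    ∑ e ∈ S, ∑ v ∈ ed e, β e v = ∑ v, ∑ e ∈ S.filter (fun e => v ∈ ed e), β e v :=
  Finset.sum_comm' (by intro e v; simp)

/-- The dual constraints at `v`, summed over the colors in a palette `s` of size at most `k`. -/
lemma sum_colored_le {V E C : Type*} [Fintype E] [DecidableEq V] [DecidableEq C]
    (ed : E → Finset V) (col : E → C) (β : E → V → ℝ) (v : V) (a : ℝ) (ha : 0 ≤ a)
    (hdual : ∀ c : C,
      ∑ e ∈ Finset.univ.filter (fun e => v ∈ ed e ∧ col e = c), β e v ≤ a)
    (s : Finset C) (k : ℕ) (hs : s.card ≤ k) :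
    ∑ e ∈ Finset.univ.filter (fun e => v ∈ ed e ∧ col e ∈ s), β e v ≤ k * a := by
  rw [← Finset.sum_fiberwise_of_maps_to (t := s) (g := col)
    (by intro e he; exact (Finset.mem_filter.1 he).2.2)]
  calc _ ≤ ∑ c ∈ s, a := by
        refine Finset.sum_le_sum fun c hc => (le_of_eq ?_).trans (hdual c)
        refine Finset.sum_congr ?_ fun _ _ => rfl
        ext e
        simp only [Finset.mem_filter, Finset.mem_univ, true_and]
        constructor
        · rintro ⟨⟨h, -⟩, h'⟩
          exact ⟨h, h'⟩
        · rintro ⟨h, rfl⟩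
          exact ⟨⟨h, hc⟩, rfl⟩
    _ = s.card * a := by simp
    _ ≤ k * a := by gcongr

/-- Performance guarantee of the primal-dual algorithm for Local ECC:
if `(α, β)` is dual feasible, `α_v ≤ (1/(b_v+1)) Σ_{e ∈ δ(v)} β_{e,v}` for every `v`,
and `σ` is a feasible multi-coloring all of whose mistakes are tight edges, then the
cost of `σ` is at most `(1 + max_v b_v)` times the cost of any feasible `σ'`. -/
theorem local_ecc_primal_dual_guarantee
    {V E C : Type*} [Fintype V] [Fintype E] [Fintype C] [Nonempty V]
    [DecidableEq V] [DecidableEq C]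
    (ed : E → Finset V) (w : E → ℝ) (col : E → C)
    (hw : ∀ e, 0 ≤ w e)
    (b : V → ℕ) (hb : ∀ v, 1 ≤ b v)
    (α : V → ℝ) (β : E → V → ℝ)
    (hα : ∀ v, 0 ≤ α v)
    (hβ : ∀ e, ∀ v ∈ ed e, 0 ≤ β e v)
    (hdual1 : ∀ (v : V) (c : C),
      ∑ e ∈ Finset.univ.filter (fun e => v ∈ ed e ∧ col e = c), β e v ≤ α v)
    (hdual2 : ∀ e, ∑ v ∈ ed e, β e v ≤ w e)
    (hratio : ∀ v, α v ≤ (1 / ((b v : ℝ) + 1)) *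
      ∑ e ∈ Finset.univ.filter (fun e => v ∈ ed e), β e v)
    (σ : V → Finset C) (hσ : ∀ v, (σ v).card ≤ b v)
    (htight : ∀ e, (∃ v ∈ ed e, col e ∉ σ v) → ∑ v ∈ ed e, β e v = w e) :
    ∀ σ' : V → Finset C, (∀ v, (σ' v).card ≤ b v) →
      ∑ e ∈ Finset.univ.filter (fun e => ∃ v ∈ ed e, col e ∉ σ v), w e ≤
        (1 + ((Finset.univ.sup' Finset.univ_nonempty b : ℕ) : ℝ)) *
          ∑ e ∈ Finset.univ.filter (fun e => ∃ v ∈ ed e, col e ∉ σ' v), w e := by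
  intro σ' hσ'
  set M := Finset.univ.filter (fun e => ∃ v ∈ ed e, col e ∉ σ v) with hM
  set M' := Finset.univ.filter (fun e => ∃ v ∈ ed e, col e ∉ σ' v) with hM'
  set m := Finset.univ.sup' Finset.univ_nonempty b with hm
  have hcost : ∑ e ∈ M, w e ≤
      ∑ v, ∑ e ∈ Finset.univ.filter (fun e => v ∈ ed e), β e v := by
    rw [← sum_edges_comm ed β Finset.univ]
    calc ∑ e ∈ M, w e = ∑ e ∈ M, ∑ v ∈ ed e, β e v :=
          Finset.sum_congr rfl fun e he => (htight e (Finset.mem_filter.1 he).2).symm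
      _ ≤ _ := Finset.sum_le_sum_of_subset_of_nonneg (Finset.subset_univ _)
          fun e _ _ => Finset.sum_nonneg (hβ e)
  have hcost' : ∑ v, ∑ e ∈ M'.filter (fun e => v ∈ ed e), β e v ≤ ∑ e ∈ M', w e := by
    rw [← sum_edges_comm]
    exact Finset.sum_le_sum fun e _ => hdual2 e
  have hlocal : ∀ v, ∑ e ∈ Finset.univ.filter (fun e => v ∈ ed e), β e v ≤
      (1 + (m : ℝ)) * ∑ e ∈ M'.filter (fun e => v ∈ ed e), β e v := by
    intro v
    have hbm : (b v : ℝ) ≤ m := by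
      exact_mod_cast Finset.le_sup' b (Finset.mem_univ v)
    have hR : 0 ≤ ∑ e ∈ M'.filter (fun e => v ∈ ed e), β e v :=
      Finset.sum_nonneg fun e he => hβ e v (Finset.mem_filter.1 he).2
    -- An edge at `v` either has its color in `σ' v` or is a mistake of `σ'`.
    have hsplit : ∑ e ∈ Finset.univ.filter (fun e => v ∈ ed e), β e v ≤
        b v * α v + ∑ e ∈ M'.filter (fun e => v ∈ ed e), β e v := by
      rw [← Finset.sum_filter_add_sum_filter_not _ (fun e => col e ∈ σ' v),
        Finset.filter_filter, Finset.filter_filter]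
      refine add_le_add
        (sum_colored_le ed col β v (α v) (hα v) (hdual1 v) (σ' v) (b v) (hσ' v)) ?_
      refine Finset.sum_le_sum_of_subset_of_nonneg ?_
        fun e he _ => hβ e v (Finset.mem_filter.1 he).2
      intro e he
      have he' := (Finset.mem_filter.1 he).2
      simp only [hM', Finset.mem_filter, Finset.mem_univ, true_and]
      exact ⟨⟨v, he'⟩, he'.1⟩
    have hr : ((b v : ℝ) + 1) * α v ≤
        ∑ e ∈ Finset.univ.filter (fun e => v ∈ ed e), β e v := by
      have hpos : (0 : ℝ) < (b v : ℝ) + 1 := by positivity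
      have h := hratio v
      rwa [one_div_mul_eq_div, le_div_iff₀' hpos] at h
    -- `B ≤ b α + R` and `(b + 1) α ≤ B` combine to `B ≤ (b + 1) R`.
    have h1 : ∑ e ∈ Finset.univ.filter (fun e => v ∈ ed e), β e v ≤
        (1 + (b v : ℝ)) * ∑ e ∈ M'.filter (fun e => v ∈ ed e), β e v := by
      have hb0 : (0 : ℝ) ≤ b v := Nat.cast_nonneg _
      nlinarith [mul_le_mul_of_nonneg_left hr hb0,
        mul_le_mul_of_nonneg_left hsplit (add_nonneg zero_le_one hb0)]
    exact h1.trans (by gcongr)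
  calc ∑ e ∈ M, w e
      ≤ ∑ v, ∑ e ∈ Finset.univ.filter (fun e => v ∈ ed e), β e v := hcost
    _ ≤ ∑ v, (1 + (m : ℝ)) * ∑ e ∈ M'.filter (fun e => v ∈ ed e), β e v :=
        Finset.sum_le_sum fun v _ => hlocal v
    _ = (1 + (m : ℝ)) * ∑ v, ∑ e ∈ M'.filter (fun e => v ∈ ed e), β e v :=
        (Finset.mul_sum _ _ _).symm
    _ ≤ (1 + (m : ℝ)) * ∑ e ∈ M', w e := by gcongr
end

section
/- In the instance LocalGap(m, b), for every multi-coloring σ with |σ(S)| ≤ b for all S ∈ V, at most b of the m edges are satisfied; equivalently, at least m − b edges are mistakes under σ. -/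
/-- In the gap instance `LocalGap(m, b)` (vertices: all `(b+1)`-element
subsets of an `m`-element set `A`; for each `a ∈ A` one edge `e_a = {S : a ∈ S}` of color
`a`), every multi-coloring `σ` with `|σ S| ≤ b` satisfies at most `b` of the `m` edges;
equivalently, at least `m − b` edges are mistakes. -/
theorem local_gap_integral_lower_bound
    {A : Type*} [Fintype A] [DecidableEq A]
    (m b : ℕ) (hb : 1 ≤ b) (hm : b + 1 ≤ m) (hA : Fintype.card A = m)
    (σ : {S : Finset A // S.card = b + 1} → Finset A)
    (hσ : ∀ S, (σ S).card ≤ b) :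
    (Finset.univ.filter (fun a : A =>
        ∀ S : {S : Finset A // S.card = b + 1}, a ∈ S.1 → a ∈ σ S)).card ≤ b ∧
    m - b ≤ (Finset.univ.filter (fun a : A =>
        ∃ S : {S : Finset A // S.card = b + 1}, a ∈ S.1 ∧ a ∉ σ S)).card := by
  have h1 : (Finset.univ.filter (fun a : A =>
      ∀ S : {S : Finset A // S.card = b + 1}, a ∈ S.1 → a ∈ σ S)).card ≤ b := by
    by_contra! h
    -- `b + 1` satisfied colors form a vertex `T`, and each of them must lie in `σ T`.
    obtain ⟨T, hT, hc⟩ := Finset.exists_subset_card_eq (Nat.succ_le_of_lt h)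
    have hsub : T ⊆ σ ⟨T, hc⟩ := fun a ha =>
      (Finset.mem_filter.1 (hT ha)).2 ⟨T, hc⟩ ha
    have h2 := Finset.card_le_card hsub
    have h3 := hσ ⟨T, hc⟩
    omega
  refine ⟨h1, ?_⟩
  have h2 := Finset.card_filter_add_card_filter_not (s := (Finset.univ : Finset A))
    (fun a : A => ∀ S : {S : Finset A // S.card = b + 1}, a ∈ S.1 → a ∈ σ S)
  rw [Finset.card_univ, hA] at h2
  simp only [not_forall, exists_prop] at h2
  omega
end

section
/- For every integer b ≥ 1 and every integer m ≥ b+1, the instance LocalGap(m, b) admits a feasible solution of the Local ECC LP with objective value m/(b+1), while every multi-coloring σ with |σ(S)| ≤ b for all S ∈ V has at least m − b mistakes; consequently, the ratio of the minimum number of mistakes of a feasible multi-coloring to this fractional LP value is at least (b+1) − b(b+1)/m, which converges to b+1 as m → ∞. (Hence the integrality gap of the Local ECC LP relaxation is at least b+1.) -/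
/-! The fractional solution spreads the budget `b` of a vertex `S` evenly over its `b + 1` colors,
so each color of `S` receives `b / (b + 1)` and every `y a` may be taken to be `1 / (b + 1)`.

Integrally, at most `b` colors can be free of mistakes: any `b + 1` mistake-free colors would
form a vertex `S` with `S ⊆ σ S`, which exceeds the budget. Dividing `m - b` by `m / (b + 1)`
gives the ratio. -/

/-- Given `b + 1` colors that are not mistakes, the vertex they form would have to receive all of
them. -/
theorem mistakes_lower_bound {A : Type*} [Fintype A] [DecidableEq A] (b : ℕ)
    (σ : {S : Finset A // S.card = b + 1} → Finset A) (hσ : ∀ S, (σ S).card ≤ b) :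
    Fintype.card A ≤ (Finset.univ.filter (fun a : A =>
      ∃ S : {S : Finset A // S.card = b + 1}, a ∈ S.1 ∧ a ∉ σ S)).card + b := by
  set M := Finset.univ.filter (fun a : A =>
      ∃ S : {S : Finset A // S.card = b + 1}, a ∈ S.1 ∧ a ∉ σ S) with hM
  by_contra! h
  have hc : b + 1 ≤ Mᶜ.card := by
    rw [Finset.card_compl]
    omega
  obtain ⟨S, hS, hScard⟩ := Finset.exists_subset_card_eq hc
  have hsub : S ⊆ σ ⟨S, hScard⟩ := by
    intro a ha
    by_contra hna
    have haM : a ∈ M := by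
      rw [hM, Finset.mem_filter]
      exact ⟨Finset.mem_univ a, ⟨S, hScard⟩, ha, hna⟩
    exact Finset.mem_compl.mp (hS ha) haM
  have h1 := Finset.card_le_card hsub
  have h2 := hσ ⟨S, hScard⟩
  omega

/-- Integrality gap of the Local ECC LP relaxation: for every `b ≥ 1`
and `m ≥ b+1`, the instance `LocalGap(m, b)` admits a feasible fractional LP solution of
objective value `m/(b+1)`, while every budget-feasible multi-coloring has at least `m − b`
mistakes; hence the ratio of the integral optimum to the LP value is at least
`(b+1) − b(b+1)/m`, which converges to `b+1` as `m → ∞`. -/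
theorem local_ecc_integrality_gap
    {A : Type*} [Fintype A] [DecidableEq A]
    (m b : ℕ) (hb : 1 ≤ b) (hm : b + 1 ≤ m) (hA : Fintype.card A = m) :
    (∃ (x : {S : Finset A // S.card = b + 1} → A → ℝ) (y : A → ℝ),
      (∀ S a, 0 ≤ x S a) ∧ (∀ a, 0 ≤ y a) ∧
      (∀ S : {S : Finset A // S.card = b + 1}, ∑ a : A, x S a ≤ (b : ℝ)) ∧
      (∀ (a : A) (S : {S : Finset A // S.card = b + 1}), a ∈ S.1 → x S a + y a ≥ 1) ∧
      ∑ a : A, (1 : ℝ) * y a = (m : ℝ) / ((b : ℝ) + 1)) ∧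
    (∀ σ : {S : Finset A // S.card = b + 1} → Finset A, (∀ S, (σ S).card ≤ b) →
      m - b ≤ (Finset.univ.filter (fun a : A =>
          ∃ S : {S : Finset A // S.card = b + 1}, a ∈ S.1 ∧ a ∉ σ S)).card ∧
      ((b : ℝ) + 1) - (b : ℝ) * ((b : ℝ) + 1) / (m : ℝ) ≤
        ((Finset.univ.filter (fun a : A =>
            ∃ S : {S : Finset A // S.card = b + 1}, a ∈ S.1 ∧ a ∉ σ S)).card : ℝ) /
          ((m : ℝ) / ((b : ℝ) + 1))) ∧
    Filter.Tendsto (fun n : ℕ => ((b : ℝ) + 1) - (b : ℝ) * ((b : ℝ) + 1) / (n : ℝ))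
      Filter.atTop (nhds ((b : ℝ) + 1)) := by
  have hb1 : (0 : ℝ) < (b : ℝ) + 1 := by positivity
  have hm0 : (0 : ℝ) < (m : ℝ) := by exact_mod_cast (by omega : 0 < m)
  refine ⟨⟨fun S a => if a ∈ S.1 then (b : ℝ) / (b + 1) else 0, fun _ => 1 / ((b : ℝ) + 1),
    ?_, ?_, ?_, ?_, ?_⟩, ?_, ?_⟩
  · intro S a
    dsimp only
    split_ifs <;> positivity
  · intro a
    positivity
  · intro S
    apply le_of_eq
    simp only [Finset.sum_ite_mem, Finset.univ_inter, Finset.sum_const, S.2, nsmul_eq_mul]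
    push_cast
    field_simp
  · intro a S ha
    simp only [ha, if_true]
    apply le_of_eq
    field_simp
  · simp only [Finset.sum_const, Finset.card_univ, hA, nsmul_eq_mul]
    ring
  · intro σ hσ
    have key := mistakes_lower_bound b σ hσ
    rw [hA] at key
    refine ⟨by omega, ?_⟩
    have keyR := (Nat.cast_le (α := ℝ)).mpr key
    rw [Nat.cast_add] at keyR
    rw [le_div_iff₀ (by positivity)]
    have e : ((b : ℝ) + 1 - b * (b + 1) / m) * (m / (b + 1)) = m - b := by
      field_simp
    rw [e]
    linarith
  · simpa using (tendsto_const_nhds (x := (b : ℝ) + 1)).sub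
      (tendsto_const_div_atTop_nhds_zero_nat ((b : ℝ) * (b + 1)))
end

section
/- Let H = (W, F) be a k-uniform hypergraph with k ≥ 2, and let S ⊆ W be a vertex cover of H. In the Local ECC reduction of H, the multi-coloring σ_S defined by σ_S(v_f) := {w : w ∈ f ∖ S} (identifying colors with elements of W) satisfies |σ_S(v_f)| ≤ k − 1 for every f ∈ F (so σ_S is feasible), and the number of mistakes of σ_S is at most |S|. -/
/-- In the Local ECC reduction of a `k`-uniform hypergraph `H = (W, F)`
(vertices `v_f` for `f ∈ F`, colors `W`, edge `e_w = {v_f : w ∈ f}` of color `w`, budget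
`k − 1`), a vertex cover `S` of `H` yields the multi-coloring `σ_S(v_f) = f \ S`, which
is feasible (`|σ_S(v_f)| ≤ k − 1`) and has at most `|S|` mistakes. -/
theorem ekvc_to_local_ecc_forward
    {W : Type*} [Fintype W] [DecidableEq W]
    (k : ℕ) (hk : 2 ≤ k) (F : Finset (Finset W))
    (huni : ∀ f ∈ F, f.card = k)
    (S : Finset W) (hcov : ∀ f ∈ F, (f ∩ S).Nonempty) :
    (∀ f ∈ F, (f \ S).card ≤ k - 1) ∧
    (Finset.univ.filter (fun w : W => ∃ f ∈ F, w ∈ f ∧ w ∉ f \ S)).card ≤ S.card := by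
  refine ⟨fun f hf => ?_, Finset.card_le_card fun w hw => ?_⟩
  · -- `S` meets `f`, so removing `S` from `f` loses at least one of its `k` elements.
    have h1 := Finset.card_sdiff_add_card_inter f S
    have h2 := (hcov f hf).card_pos
    have h3 := huni f hf
    omega
  · -- A color `w ∈ f` missing from `f \ S` lies in `S`, so every mistake is indexed by `S`.
    obtain ⟨f, -, hwf, hw'⟩ := (Finset.mem_filter.mp hw).2
    by_contra hwS
    exact hw' (Finset.mem_sdiff.mpr ⟨hwf, hwS⟩)
end

section
/- Let H = (W, F) be a k-uniform hypergraph with k ≥ 2, and let σ be any feasible multi-coloring of the Local ECC reduction of H (i.e., |σ(v_f)| ≤ k − 1 for all f ∈ F). Then the set S_σ := {w ∈ W : e_w is a mistake under σ} is a vertex cover of H; in particular, for every f ∈ F there exists w ∈ f such that e_w is a mistake under σ. -/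
/-- In the Local ECC reduction of a `k`-uniform hypergraph `H = (W, F)`,
for any feasible multi-coloring `σ` (i.e. `|σ(v_f)| ≤ k − 1` for all `f ∈ F`), the set
`S_σ = {w : e_w is a mistake under σ}` is a vertex cover of `H`; in particular every
`f ∈ F` contains some `w` whose edge `e_w` is a mistake under `σ`. -/
theorem ekvc_to_local_ecc_backward
    {W : Type*} [Fintype W] [DecidableEq W]
    (k : ℕ) (hk : 2 ≤ k) (F : Finset (Finset W))
    (huni : ∀ f ∈ F, f.card = k)
    (σ : Finset W → Finset W)
    (hσ : ∀ f ∈ F, (σ f).card ≤ k - 1) :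
    (∀ f ∈ F,
      (f ∩ Finset.univ.filter (fun w : W => ∃ f' ∈ F, w ∈ f' ∧ w ∉ σ f')).Nonempty) ∧
    (∀ f ∈ F, ∃ w ∈ f, ∃ f' ∈ F, w ∈ f' ∧ w ∉ σ f') := by
  -- `σ f` has fewer than `k = |f|` colors, so some `w ∈ f` is missing from it; then `e_w` is
  -- already a mistake at its own vertex `v_f`.
  have key : ∀ f ∈ F, ∃ w ∈ f, ∃ f' ∈ F, w ∈ f' ∧ w ∉ σ f' := by
    intro f hf
    have hlt : (σ f).card < f.card := by
      have h1 := huni f hf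
      have h2 := hσ f hf
      omega
    obtain ⟨w, hw, hwσ⟩ := Finset.exists_mem_notMem_of_card_lt_card hlt
    exact ⟨w, hw, f, hf, hw, hwσ⟩
  refine ⟨fun f hf => ?_, key⟩
  obtain ⟨w, hw, hmistake⟩ := key f hf
  exact ⟨w, Finset.mem_inter.2 ⟨hw, Finset.mem_filter.2 ⟨Finset.mem_univ w, hmistake⟩⟩⟩
end

section
/- Let H = (W, F) be a k-uniform hypergraph with k ≥ 2 and W finite and nonempty. Then the minimum size of a vertex cover of H equals the minimum number of mistakes of a feasible multi-coloring of the Local ECC reduction of H (with budget k − 1). (This is the approximation-preserving reduction underlying the (b+1−ε) UGC-hardness and (b−ε) NP-hardness of Local ECC.) -/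
/-! Both sides are minima over nonempty sets of naturals, so each inequality follows by turning a
solution of one problem into a solution of the other that is at most as large. The mistakes of a
feasible multi-coloring `σ` form a vertex cover: every `f` has `k` elements and `σ f` at most
`k - 1`, so some `w ∈ f` is not in `σ f`. Conversely, a vertex cover `S` gives the multi-coloring
`f ↦ f \ S`, which is feasible because `S` meets every `f`, and all of whose mistakes lie in `S`.
-/

/-- Approximation-preserving reduction from `Ek-Vertex-Cover` to Local
ECC: for a `k`-uniform hypergraph `H = (W, F)` with `k ≥ 2` and `W` finite nonempty, the
minimum size of a vertex cover of `H` equals the minimum number of mistakes of a feasible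
multi-coloring (budget `k − 1`) of the Local ECC reduction of `H`. -/
theorem ekvc_local_ecc_equivalence
    {W : Type*} [Fintype W] [DecidableEq W] [Nonempty W]
    (k : ℕ) (hk : 2 ≤ k) (F : Finset (Finset W))
    (huni : ∀ f ∈ F, f.card = k) :
    sInf {n : ℕ | ∃ S : Finset W, (∀ f ∈ F, (f ∩ S).Nonempty) ∧ S.card = n} =
    sInf {n : ℕ | ∃ σ : Finset W → Finset W,
      (∀ f ∈ F, (σ f).card ≤ k - 1) ∧
      (Finset.univ.filter (fun w : W => ∃ f ∈ F, w ∈ f ∧ w ∉ σ f)).card = n} := by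
  apply le_antisymm
  · refine le_csInf ⟨_, fun _ => ∅, by simp, rfl⟩ ?_
    rintro n ⟨σ, hσ, rfl⟩
    refine Nat.sInf_le ⟨_, fun f hf => ?_, rfl⟩
    -- The budget `k - 1` is genuinely smaller than `k` only because `k` is positive.
    have hlt : (σ f).card < f.card := by
      have h1 := hσ f hf
      have h2 := huni f hf
      omega
    obtain ⟨w, hwf, hwσ⟩ := Finset.exists_mem_notMem_of_card_lt_card hlt
    exact ⟨w, Finset.mem_inter.2 ⟨hwf, Finset.mem_filter.2
      ⟨Finset.mem_univ w, f, hf, hwf, hwσ⟩⟩⟩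
  -- The whole vertex set is a cover, since edges are nonempty.
  · refine le_csInf ⟨_, Finset.univ, fun f hf => ?_, rfl⟩ ?_
    · rw [Finset.inter_univ, ← Finset.card_pos, huni f hf]
      omega
    rintro n ⟨S, hS, rfl⟩
    refine le_trans (Nat.sInf_le ?_) (Finset.card_le_card (s :=
      Finset.univ.filter (fun w : W => ∃ f ∈ F, w ∈ f ∧ w ∉ f \ S)) fun w hw => ?_)
    · refine ⟨fun f => f \ S, fun f hf => ?_, rfl⟩
      change (f \ S).card ≤ k - 1
      have h1 := Finset.card_sdiff_add_card_inter f S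
      have h2 := (hS f hf).card_pos
      have h3 := huni f hf
      omega
    · obtain ⟨-, f, -, hwf, hw'⟩ := Finset.mem_filter.1 hw
      by_contra hwS
      exact hw' (Finset.mem_sdiff.2 ⟨hwf, hwS⟩)
end

section
/- Let H be an edge-colored weighted hypergraph with uniform budget b ∈ ℤ_{≥1}, and let τ ∈ ℤ_{≥0}. Suppose (α, β) is dual feasible for Local ECC, that α_v ≤ (1/(b + τ + 1)) · Σ_{e ∈ δ(v)} β_{e,v} for every v ∈ V, and that σ is a multi-coloring with |σ(v)| ≤ b + τ for all v ∈ V such that every edge that is a mistake under σ is tight. Then the cost of σ is at most (1 + b/(τ + 1)) times the cost of σ', for every multi-coloring σ' with |σ'(v)| ≤ b for all v ∈ V. (Bicriteria guarantee for Local ECC: with τ = ⌈b/ε⌉ − 1 this yields a (1+ε, 1 + (1/b)⌈b/ε⌉ − 1/b)-approximation.) -/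
/-!
Write `B v = ∑_{e ∈ δ(v)} β e v` and `B = ∑_v B v`. Mistakes of `σ` are tight and `β ≥ 0`, so the
cost of `σ` is at most `B`. Conversely, every pair `(e, v)` with `col e ∉ σ' v` lies on a mistake
of `σ'`, whose weight is at least its total `β`; and at each `v` the edges whose colors lie in
`σ' v` carry at most `b * α v ≤ b / (b + τ + 1) * B v`, by summing the first dual constraint over
the at most `b` colors of `σ' v`. Hence the cost of `σ'` is at least `(τ + 1) / (b + τ + 1) * B`,
and `(b + τ + 1) / (τ + 1) = 1 + b / (τ + 1)`.
-/

/-- At a vertex of budget `b`, the edges colored from the chosen set `S` carry dual value at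
most `b * a`, so the remaining edges carry at least the total minus `b * a`. -/
lemma sum_sub_le_sum_missed {E C : Type*} [DecidableEq C] (D : Finset E)
    (col : E → C) (f : E → ℝ) (a : ℝ) (ha : 0 ≤ a) (b : ℕ) (S : Finset C) (hS : S.card ≤ b)
    (h : ∀ c, ∑ e ∈ D.filter (fun e => col e = c), f e ≤ a) :
    ∑ e ∈ D, f e - b * a ≤ ∑ e ∈ D.filter (fun e => col e ∉ S), f e := by
  have hsplit := Finset.sum_filter_add_sum_filter_not D (fun e => col e ∈ S) f
  have hfib : ∑ c ∈ S, ∑ e ∈ D.filter (fun e => col e = c), f e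
      = ∑ e ∈ D.filter (fun e => col e ∈ S), f e := by
    apply Finset.sum_fiberwise_eq_sum_filter
  have hle : ∑ c ∈ S, ∑ e ∈ D.filter (fun e => col e = c), f e ≤ S.card * a := by
    simpa using Finset.sum_le_sum (s := S) fun c _ => h c
  have hcard : (S.card : ℝ) * a ≤ b * a := by gcongr
  linarith

/-- Bicriteria guarantee for Local ECC: with uniform budget `b ≥ 1` and
relaxation `τ ≥ 0`, if `(α, β)` is dual feasible, `α_v ≤ (1/(b+τ+1)) Σ_{e ∈ δ(v)} β_{e,v}`
for every `v`, and `σ` uses at most `b + τ` colors per vertex with all its mistakes tight,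
then the cost of `σ` is at most `(1 + b/(τ+1))` times the cost of any `σ'` using at most
`b` colors per vertex. -/
theorem local_ecc_bicriteria_guarantee
    {V E C : Type*} [Fintype V] [Fintype E] [Fintype C]
    [DecidableEq V] [DecidableEq C]
    (ed : E → Finset V) (w : E → ℝ) (col : E → C)
    (hw : ∀ e, 0 ≤ w e)
    (b τ : ℕ) (hb : 1 ≤ b)
    (α : V → ℝ) (β : E → V → ℝ)
    (hα : ∀ v, 0 ≤ α v)
    (hβ : ∀ e, ∀ v ∈ ed e, 0 ≤ β e v)
    (hdual1 : ∀ (v : V) (c : C),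
      ∑ e ∈ Finset.univ.filter (fun e => v ∈ ed e ∧ col e = c), β e v ≤ α v)
    (hdual2 : ∀ e, ∑ v ∈ ed e, β e v ≤ w e)
    (hratio : ∀ v, α v ≤ (1 / ((b : ℝ) + (τ : ℝ) + 1)) *
      ∑ e ∈ Finset.univ.filter (fun e => v ∈ ed e), β e v)
    (σ : V → Finset C) (hσ : ∀ v, (σ v).card ≤ b + τ)
    (htight : ∀ e, (∃ v ∈ ed e, col e ∉ σ v) → ∑ v ∈ ed e, β e v = w e) :
    ∀ σ' : V → Finset C, (∀ v, (σ' v).card ≤ b) →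
      ∑ e ∈ Finset.univ.filter (fun e => ∃ v ∈ ed e, col e ∉ σ v), w e ≤
        (1 + (b : ℝ) / ((τ : ℝ) + 1)) *
          ∑ e ∈ Finset.univ.filter (fun e => ∃ v ∈ ed e, col e ∉ σ' v), w e := by
  intro σ' hσ'
  have hswap : ∑ e, ∑ v ∈ ed e, β e v
      = ∑ v, ∑ e ∈ Finset.univ.filter (fun e => v ∈ ed e), β e v :=
    Finset.sum_comm' (by simp)
  have hup : ∑ e ∈ Finset.univ.filter (fun e => ∃ v ∈ ed e, col e ∉ σ v), w e
      ≤ ∑ e, ∑ v ∈ ed e, β e v := by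
    rw [Finset.sum_congr rfl fun e he => (htight e (Finset.mem_filter.1 he).2).symm]
    exact Finset.sum_le_sum_of_subset_of_nonneg (Finset.filter_subset _ _)
      fun e _ _ => Finset.sum_nonneg (hβ e)
  have hmiss : ∑ v, ∑ e ∈ (Finset.univ.filter (fun e => v ∈ ed e)).filter
        (fun e => col e ∉ σ' v), β e v
      ≤ ∑ e ∈ Finset.univ.filter (fun e => ∃ v ∈ ed e, col e ∉ σ' v), w e := by
    rw [Finset.sum_comm' (s' := fun e => (ed e).filter (fun v => col e ∉ σ' v))
      (t' := Finset.univ.filter (fun e => ∃ v ∈ ed e, col e ∉ σ' v))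
      (by
        intro v e
        simp only [Finset.mem_univ, Finset.mem_filter, true_and]
        exact ⟨fun h => ⟨h, v, h⟩, fun h => h.1⟩)]
    refine Finset.sum_le_sum fun e _ => le_trans ?_ (hdual2 e)
    exact Finset.sum_le_sum_of_subset_of_nonneg (Finset.filter_subset _ _)
      fun v hv _ => hβ e v hv
  have hvert : ∀ v, ((τ : ℝ) + 1) / (b + τ + 1) *
        ∑ e ∈ Finset.univ.filter (fun e => v ∈ ed e), β e v
      ≤ ∑ e ∈ (Finset.univ.filter (fun e => v ∈ ed e)).filter
        (fun e => col e ∉ σ' v), β e v := by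
    intro v
    have h1 := sum_sub_le_sum_missed (Finset.univ.filter (fun e => v ∈ ed e)) col
      (fun e => β e v) (α v) (hα v) b (σ' v) (hσ' v)
      (fun c => by rw [Finset.filter_filter]; exact hdual1 v c)
    have h2 := mul_le_mul_of_nonneg_left (hratio v) (Nat.cast_nonneg (α := ℝ) b)
    have h3 : ((τ : ℝ) + 1) / (b + τ + 1) = 1 - b * (1 / (b + τ + 1)) := by
      field_simp
      ring
    rw [h3]
    linarith
  have hlow := (Finset.sum_le_sum fun v (_ : v ∈ Finset.univ) => hvert v).trans hmiss
  rw [← Finset.mul_sum, ← hswap] at hlow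
  calc _ ≤ ∑ e, ∑ v ∈ ed e, β e v := hup
    _ = (1 + (b : ℝ) / (τ + 1)) *
        (((τ : ℝ) + 1) / (b + τ + 1) * ∑ e, ∑ v ∈ ed e, β e v) := by
      field_simp
      ring
    _ ≤ _ := mul_le_mul_of_nonneg_left hlow (by positivity)
end

section
/- Let H be an edge-colored weighted hypergraph and b ∈ ℤ_{≥0} a removal budget, and let (α, β, λ) be dual feasible for Robust ECC. Then every feasible solution (V_R, σ) to Robust ECC satisfies: the cost of (V_R, σ) is at least Σ_{e ∈ E} Σ_{v ∈ e} β_{e,v} − Σ_{v ∈ V} α_v − λ · b. -/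
/-!
Call an incident pair `(e, v)` bad if `v` is kept and `σ v ≠ col e`, and good otherwise; split
`∑ e, ∑ v ∈ ed e, β e v` accordingly. Bad pairs occur only in mistakes, so summing them edge by
edge and using `hdual2` bounds them by the cost. Good pairs are summed vertex by vertex: at a
removed vertex every incident edge is good and `hdual3` gives at most `α v + lam`, while at a kept
vertex the good edges are those of color `σ v` and `hdual1` gives at most `α v`. There are at most
`b` removed vertices.
-/

/-- Weak LP duality bound for Robust ECC: any dual feasible triple
`(α, β, λ)` gives a lower bound `Σ_{e,v∈e} β_{e,v} − Σ_v α_v − λ·b` on the cost of every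
feasible solution `(V_R, σ)` (with `|V_R| ≤ b`). -/
theorem robust_ecc_weak_duality
    {V E C : Type*} [Fintype V] [Fintype E] [Fintype C]
    [DecidableEq V] [DecidableEq C]
    (ed : E → Finset V) (w : E → ℝ) (col : E → C)
    (hw : ∀ e, 0 ≤ w e)
    (b : ℕ)
    (α : V → ℝ) (β : E → V → ℝ) (lam : ℝ)
    (hα : ∀ v, 0 ≤ α v)
    (hβ : ∀ e, ∀ v ∈ ed e, 0 ≤ β e v)
    (hlam : 0 ≤ lam)
    (hdual1 : ∀ (v : V) (c : C),
      ∑ e ∈ Finset.univ.filter (fun e => v ∈ ed e ∧ col e = c), β e v ≤ α v)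
    (hdual2 : ∀ e, ∑ v ∈ ed e, β e v ≤ w e)
    (hdual3 : ∀ v,
      ∑ e ∈ Finset.univ.filter (fun e => v ∈ ed e), β e v - α v ≤ lam)
    (VR : Finset V) (hVR : VR.card ≤ b) (σ : V → C) :
    ∑ e ∈ Finset.univ.filter (fun e => ∃ v ∈ ed e, v ∉ VR ∧ σ v ≠ col e), w e ≥
      ∑ e, ∑ v ∈ ed e, β e v - ∑ v, α v - lam * b := by
  classical
  have hbad : ∀ e, ∑ v ∈ ed e, (if v ∉ VR ∧ σ v ≠ col e then β e v else 0) ≤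
      if ∃ v ∈ ed e, v ∉ VR ∧ σ v ≠ col e then w e else 0 := by
    intro e
    split_ifs with h
    · refine le_trans (Finset.sum_le_sum fun v hv => ?_) (hdual2 e)
      split_ifs
      · exact le_rfl
      · exact hβ e v hv
    · refine (Finset.sum_eq_zero fun v hv => ?_).le
      exact if_neg fun hv' => h ⟨v, hv, hv'⟩
  have hgood : ∀ v, ∑ e, (if v ∈ ed e then
      (if v ∉ VR ∧ σ v ≠ col e then 0 else β e v) else 0) ≤
      α v + if v ∈ VR then lam else 0 := by
    intro v
    by_cases hv : v ∈ VR
    · have h := hdual3 v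
      rw [Finset.sum_filter] at h
      simp only [hv, not_true_eq_false, false_and, if_false, if_true]
      linarith
    · have h := hdual1 v (σ v)
      rw [Finset.sum_filter] at h
      simp only [hv, if_false, add_zero]
      refine le_trans (Finset.sum_le_sum fun e _ => le_of_eq ?_) h
      by_cases h1 : v ∈ ed e <;> by_cases h2 : σ v = col e <;> simp [h1, h2, eq_comm (a := col e)]
  have hsplit : ∑ e, ∑ v ∈ ed e, β e v =
      ∑ e, ∑ v ∈ ed e, (if v ∉ VR ∧ σ v ≠ col e then β e v else 0) +
      ∑ v, ∑ e, (if v ∈ ed e then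
        (if v ∉ VR ∧ σ v ≠ col e then 0 else β e v) else 0) := by
    rw [Finset.sum_comm (s := (Finset.univ : Finset V)), ← Finset.sum_add_distrib]
    refine Finset.sum_congr rfl fun e _ => ?_
    rw [Finset.sum_ite_mem, Finset.univ_inter, ← Finset.sum_add_distrib]
    refine Finset.sum_congr rfl fun v _ => ?_
    split_ifs <;> simp
  have hB := Finset.sum_le_sum fun e (_ : e ∈ Finset.univ) => hbad e
  have hG := Finset.sum_le_sum fun v (_ : v ∈ Finset.univ) => hgood v
  have hremoved : ∑ v, (if v ∈ VR then lam else 0) = VR.card * lam := by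
    simp
  rw [Finset.sum_add_distrib, hremoved] at hG
  have hbudget : (VR.card : ℝ) * lam ≤ b * lam :=
    mul_le_mul_of_nonneg_right (by exact_mod_cast hVR) hlam
  rw [← Finset.sum_filter] at hB
  have hcost : ∑ e ∈ Finset.univ.filter (fun e => ∃ v ∈ ed e, v ∉ VR ∧ σ v ≠ col e), w e ≥
      ∑ e, ∑ v ∈ ed e, (if v ∉ VR ∧ σ v ≠ col e then β e v else 0) := by
    -- the two filters may carry different decidability instances
    convert hB
  linarith
end

section
/- Let H be an edge-colored weighted hypergraph and b ∈ ℤ_{≥0} a removal budget. Suppose (α, β, λ) is dual feasible for Robust ECC and α_v ≤ (1/2) · Σ_{e ∈ δ(v)} β_{e,v} for every v ∈ V. Let (V_R, σ) be a feasible solution to Robust ECC such that every edge that is a mistake under (V_R, σ) is tight, and suppose there exists R' ⊆ V with V_R ⊆ R', |R'| ≥ b + 1, and Σ_{e ∈ δ(v)} β_{e,v} − α_v = λ for every v ∈ R'. Then the cost of (V_R, σ) is at most 2(b+1) times the cost of (V_R', σ'), for every feasible solution (V_R', σ') to Robust ECC. (Performance guarantee of the primal-dual 2(b+1)-approximation algorithm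 for Robust ECC.) -/
/-!
Put `B v = ∑_{e ∈ δ(v)} β e v` and `S v = B v - α v`, so that `hhalf` reads `B v ≤ 2 * S v` and
in particular `0 ≤ S v`. Let `T = ∑ v, S v`.

* Upper bound: every mistake of `(VR, σ)` is tight, so its cost is a sum of `β e v` over some
  incident pairs, hence at most `∑ v, B v ≤ 2 * T`.
* Lower bound: at a vertex `v ∉ VR'`, every incident edge not coloured `σ' v` is a mistake of
  `(VR', σ')`, and by the first dual constraint these edges carry `β`-mass at least `S v`. Hence
  the cost of `(VR', σ')` is at least `∑_{v ∉ VR'} S v ≥ T - b * lam`.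
* Since `S = lam` on `R'` and `|R'| ≥ b + 1`, we have `T ≥ (b + 1) * lam`, which is exactly what
  `2 * T ≤ 2 * (b + 1) * (T - b * lam)` requires.
-/

/-- Double counting of incident pairs `(e, v)` with `e ∈ M`. -/
lemma sum_edges_eq_sum_vertices {V E : Type*} [Fintype V] [DecidableEq V]
    (ed : E → Finset V) (β : E → V → ℝ) (M : Finset E) :
    ∑ e ∈ M, ∑ v ∈ ed e, β e v = ∑ v, ∑ e ∈ M.filter (fun e => v ∈ ed e), β e v :=
  Finset.sum_comm' (by simp)

/-- Performance guarantee of the primal-dual `2(b+1)`-approximation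
algorithm for Robust ECC: if `(α, β, λ)` is dual feasible, `α_v ≤ (1/2) Σ_{e ∈ δ(v)} β_{e,v}`
for every `v`, `(V_R, σ)` is feasible (`|V_R| ≤ b`) with all its mistakes tight, and there
is `R' ⊇ V_R` with `|R'| ≥ b + 1` such that `Σ_{e ∈ δ(v)} β_{e,v} − α_v = λ` for every
`v ∈ R'`, then the cost of `(V_R, σ)` is at most `2(b+1)` times the cost of every feasible
`(V_R', σ')`. -/
theorem robust_ecc_primal_dual_guarantee
    {V E C : Type*} [Fintype V] [Fintype E] [Fintype C]
    [DecidableEq V] [DecidableEq C]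
    (ed : E → Finset V) (w : E → ℝ) (col : E → C)
    (hw : ∀ e, 0 ≤ w e)
    (b : ℕ)
    (α : V → ℝ) (β : E → V → ℝ) (lam : ℝ)
    (hα : ∀ v, 0 ≤ α v)
    (hβ : ∀ e, ∀ v ∈ ed e, 0 ≤ β e v)
    (hlam : 0 ≤ lam)
    (hdual1 : ∀ (v : V) (c : C),
      ∑ e ∈ Finset.univ.filter (fun e => v ∈ ed e ∧ col e = c), β e v ≤ α v)
    (hdual2 : ∀ e, ∑ v ∈ ed e, β e v ≤ w e)
    (hdual3 : ∀ v,
      ∑ e ∈ Finset.univ.filter (fun e => v ∈ ed e), β e v - α v ≤ lam)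
    (hhalf : ∀ v, α v ≤ (1 / 2) *
      ∑ e ∈ Finset.univ.filter (fun e => v ∈ ed e), β e v)
    (VR : Finset V) (hVR : VR.card ≤ b) (σ : V → C)
    (htight : ∀ e, (∃ v ∈ ed e, v ∉ VR ∧ σ v ≠ col e) → ∑ v ∈ ed e, β e v = w e)
    (R' : Finset V) (hsub : VR ⊆ R') (hR'card : b + 1 ≤ R'.card)
    (hR' : ∀ v ∈ R',
      ∑ e ∈ Finset.univ.filter (fun e => v ∈ ed e), β e v - α v = lam) :
    ∀ (VR' : Finset V), VR'.card ≤ b → ∀ σ' : V → C,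
      ∑ e ∈ Finset.univ.filter (fun e => ∃ v ∈ ed e, v ∉ VR ∧ σ v ≠ col e), w e ≤
        2 * ((b : ℝ) + 1) *
          ∑ e ∈ Finset.univ.filter (fun e => ∃ v ∈ ed e, v ∉ VR' ∧ σ' v ≠ col e), w e := by
  intro VR' hVR' σ'
  set B : V → ℝ := fun v => ∑ e ∈ Finset.univ.filter (fun e => v ∈ ed e), β e v with hB
  set M := Finset.univ.filter (fun e => ∃ v ∈ ed e, v ∉ VR ∧ σ v ≠ col e) with hM
  set M' := Finset.univ.filter (fun e => ∃ v ∈ ed e, v ∉ VR' ∧ σ' v ≠ col e) with hM'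
  have hS (v : V) : 0 ≤ B v - α v := by
    have h1 : α v ≤ (1 / 2) * B v := hhalf v
    linarith [hα v]
  have upper : ∑ e ∈ M, w e ≤ 2 * ∑ v, (B v - α v) := by
    calc ∑ e ∈ M, w e = ∑ e ∈ M, ∑ v ∈ ed e, β e v :=
          Finset.sum_congr rfl fun e he => (htight e (Finset.mem_filter.1 he).2).symm
      _ = ∑ v, ∑ e ∈ M.filter (fun e => v ∈ ed e), β e v := sum_edges_eq_sum_vertices ed β M
      _ ≤ ∑ v, B v := by
          refine Finset.sum_le_sum fun v _ => Finset.sum_le_sum_of_subset_of_nonneg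
            (Finset.filter_subset_filter _ (Finset.subset_univ _)) fun e he _ => ?_
          exact hβ e v (Finset.mem_filter.1 he).2
      _ ≤ 2 * ∑ v, (B v - α v) := by
          rw [Finset.mul_sum]
          refine Finset.sum_le_sum fun v _ => ?_
          have h1 : α v ≤ (1 / 2) * B v := hhalf v
          linarith
  have mass (v : V) (hv : v ∉ VR') :
      B v - α v ≤ ∑ e ∈ M'.filter (fun e => v ∈ ed e), β e v := by
    have hsplit := Finset.sum_filter_add_sum_filter_not
      (Finset.univ.filter (fun e => v ∈ ed e)) (fun e => col e = σ' v) (fun e => β e v)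
    rw [Finset.filter_filter] at hsplit
    have hle : ∑ e ∈ (Finset.univ.filter (fun e => v ∈ ed e)).filter (fun e => ¬ col e = σ' v),
        β e v ≤ ∑ e ∈ M'.filter (fun e => v ∈ ed e), β e v := by
      refine Finset.sum_le_sum_of_subset_of_nonneg (fun e he => ?_) fun e he _ =>
        hβ e v (Finset.mem_filter.1 he).2
      simp only [Finset.mem_filter, Finset.mem_univ, true_and, hM'] at he ⊢
      exact ⟨⟨v, he.1, hv, fun h => he.2 h.symm⟩, he.1⟩
    have hd := hdual1 v (σ' v)
    simp only [hB]
    linarith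
  have lower : ∑ v, (B v - α v) - b * lam ≤ ∑ e ∈ M', w e := by
    have hrem : ∑ v ∈ VR', (B v - α v) ≤ b * lam := by
      calc ∑ v ∈ VR', (B v - α v) ≤ VR'.card • lam :=
            Finset.sum_le_card_nsmul _ _ _ fun v _ => hdual3 v
        _ ≤ b * lam := by
            rw [nsmul_eq_mul]
            exact mul_le_mul_of_nonneg_right (by exact_mod_cast hVR') hlam
    have hkeep : ∑ v ∈ VR'ᶜ, (B v - α v) ≤ ∑ e ∈ M', w e := by
      calc ∑ v ∈ VR'ᶜ, (B v - α v)
          ≤ ∑ v ∈ VR'ᶜ, ∑ e ∈ M'.filter (fun e => v ∈ ed e), β e v :=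
            Finset.sum_le_sum fun v hv => mass v (Finset.mem_compl.1 hv)
        _ ≤ ∑ v, ∑ e ∈ M'.filter (fun e => v ∈ ed e), β e v :=
            Finset.sum_le_sum_of_subset_of_nonneg (Finset.subset_univ _) fun v _ _ =>
              Finset.sum_nonneg fun e he => hβ e v (Finset.mem_filter.1 he).2
        _ = ∑ e ∈ M', ∑ v ∈ ed e, β e v := (sum_edges_eq_sum_vertices ed β M').symm
        _ ≤ ∑ e ∈ M', w e := Finset.sum_le_sum fun e _ => hdual2 e
    have := Finset.sum_add_sum_compl VR' (fun v => B v - α v)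
    linarith
  have total : ((b : ℝ) + 1) * lam ≤ ∑ v, (B v - α v) := by
    calc ((b : ℝ) + 1) * lam ≤ R'.card * lam :=
          mul_le_mul_of_nonneg_right (by exact_mod_cast hR'card) hlam
      _ = ∑ v ∈ R', (B v - α v) := by
          rw [Finset.sum_congr rfl hR', Finset.sum_const, nsmul_eq_mul]
      _ ≤ ∑ v, (B v - α v) :=
          Finset.sum_le_sum_of_subset_of_nonneg (Finset.subset_univ _) fun v _ _ => hS v
  have hb : (0 : ℝ) ≤ b := Nat.cast_nonneg b
  have h1 := mul_le_mul_of_nonneg_left lower (by positivity : (0 : ℝ) ≤ 2 * ((b : ℝ) + 1))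
  have h2 := mul_le_mul_of_nonneg_left total hb
  linarith
end

section
/- For every integer b ≥ 0, the instance TwoEdge(b) witnesses that the integrality gap of the Robust ECC LP is at least b+1: the assignment z_v := b/(b+1) for all v ∈ V, x_{v,c_{e_1}} = x_{v,c_{e_2}} := 1/(2(b+1)) (and x_{v,c} := 0 for all other colors c), and y_{e_1} = y_{e_2} := 1/(2(b+1)) is feasible for the Robust ECC LP with budget b and has objective value 1/(b+1), while every feasible integral solution (V_R, σ) with |V_R| ≤ b has cost at least 1. -/
/-!
On the fractional side, two copies of `1 / (2 * (b + 1))` complement `b / (b + 1)` to exactly `1`;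
this single identity makes the packing constraint at each vertex and the covering constraint of each
edge tight, and the budget is tight because `|V| = b + 1`. On the integral side, removing at most `b`
of the `b + 1` vertices leaves a vertex that lies in both edges, and its one color
cannot agree with both edge colors.
-/

/-- Integrality gap of the Robust ECC LP: on `TwoEdge(b)`, the fractional
assignment `z_v = b/(b+1)`, `x_{v,c1} = x_{v,c2} = 1/(2(b+1))` (and `0` on other colors),
`y_{e1} = y_{e2} = 1/(2(b+1))` is feasible for the Robust ECC LP with budget `b` and has
objective value `1/(b+1)`, while every feasible integral solution has cost at least `1`;
hence the integrality gap is at least `b+1`. -/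
theorem twoedge_robust_integrality_gap
    {V C : Type*} [Fintype V] [Fintype C] [DecidableEq V] [DecidableEq C]
    (b : ℕ) (hV : Fintype.card V = b + 1)
    (c1 c2 : C) (hne : c1 ≠ c2) :
    -- nonnegativity of z, x, y
    ((0 : ℝ) ≤ (b : ℝ) / ((b : ℝ) + 1)) ∧
    (∀ c : C, (0 : ℝ) ≤ (if c = c1 ∨ c = c2 then 1 / (2 * ((b : ℝ) + 1)) else 0)) ∧
    ((0 : ℝ) ≤ 1 / (2 * ((b : ℝ) + 1))) ∧
    -- z_v + Σ_c x_{v,c} ≤ 1 for all v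
    (∀ _v : V, (b : ℝ) / ((b : ℝ) + 1) +
      ∑ c : C, (if c = c1 ∨ c = c2 then 1 / (2 * ((b : ℝ) + 1)) else 0) ≤ 1) ∧
    -- z_v + x_{v,c_e} + y_e ≥ 1 for both edges and all v ∈ e
    (∀ _v : V, (b : ℝ) / ((b : ℝ) + 1) +
      (if c1 = c1 ∨ c1 = c2 then 1 / (2 * ((b : ℝ) + 1)) else 0) +
      1 / (2 * ((b : ℝ) + 1)) ≥ 1) ∧
    (∀ _v : V, (b : ℝ) / ((b : ℝ) + 1) +
      (if c2 = c1 ∨ c2 = c2 then 1 / (2 * ((b : ℝ) + 1)) else 0) +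
      1 / (2 * ((b : ℝ) + 1)) ≥ 1) ∧
    -- Σ_v z_v ≤ b
    (∑ _v : V, (b : ℝ) / ((b : ℝ) + 1) ≤ (b : ℝ)) ∧
    -- objective value equals 1/(b+1)
    ((1 : ℝ) * (1 / (2 * ((b : ℝ) + 1))) + 1 * (1 / (2 * ((b : ℝ) + 1)))
      = 1 / ((b : ℝ) + 1)) ∧
    -- every feasible integral solution has cost at least 1
    (∀ VR : Finset V, VR.card ≤ b → ∀ σ : V → C,
      (1 : ℝ) ≤ (if ∃ v, v ∉ VR ∧ σ v ≠ c1 then 1 else 0) +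
                (if ∃ v, v ∉ VR ∧ σ v ≠ c2 then 1 else 0)) := by
  have hb : (0 : ℝ) < (b : ℝ) + 1 := by positivity
  have hcover : (b : ℝ) / ((b : ℝ) + 1) + 1 / (2 * ((b : ℝ) + 1)) + 1 / (2 * ((b : ℝ) + 1)) = 1 := by
    field_simp
    ring
  -- Only the two distinct colors `c1`, `c2` carry mass.
  have hsum : ∑ c : C, (if c = c1 ∨ c = c2 then 1 / (2 * ((b : ℝ) + 1)) else 0)
      = 1 / (2 * ((b : ℝ) + 1)) + 1 / (2 * ((b : ℝ) + 1)) := by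
    have hfilter : Finset.univ.filter (fun c : C => c = c1 ∨ c = c2) = {c1, c2} := by
      ext c
      simp
    rw [← Finset.sum_filter, hfilter, Finset.sum_pair hne]
  refine ⟨by positivity, fun c => ?_, by positivity, fun _ => ?_, fun _ => ?_, fun _ => ?_,
    ?_, ?_, fun VR hVR σ => ?_⟩
  · split_ifs <;> positivity
  · rw [hsum]
    linarith
  · rw [if_pos (Or.inl rfl)]
    exact hcover.ge
  · rw [if_pos (Or.inr rfl)]
    exact hcover.ge
  · rw [Finset.sum_const, Finset.card_univ, hV, nsmul_eq_mul]
    push_cast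
    rw [mul_div_cancel₀ (b : ℝ) hb.ne']
  · field_simp
    norm_num
  -- Some vertex survives the removal, and its color differs from `c1` or from `c2`.
  · obtain ⟨v, hv⟩ : ∃ v, v ∉ VR := by
      by_contra! h
      have hcard : VR.card = Fintype.card V := by
        rw [Finset.eq_univ_iff_forall.mpr h, Finset.card_univ]
      omega
    by_cases h1 : σ v = c1
    · have h2 : ∃ v, v ∉ VR ∧ σ v ≠ c2 := ⟨v, hv, h1 ▸ hne⟩
      rw [if_pos h2]
      split_ifs <;> norm_num
    · have h2 : ∃ v, v ∉ VR ∧ σ v ≠ c1 := ⟨v, hv, h1⟩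
      rw [if_pos h2]
      split_ifs <;> norm_num
end

section
/- Let H be an edge-colored weighted hypergraph and b ∈ ℤ_{≥0} a global budget, and let (α, β, λ) be dual feasible for Global ECC. Then every multi-coloring σ that is feasible for Global ECC satisfies: the cost of σ is at least Σ_{e ∈ E} Σ_{v ∈ e} β_{e,v} − Σ_{v ∈ V} α_v − λ · b. -/
/-!
Call a pair `(e, v)` with `v ∈ e` *covered* if the color of `e` lies in `σ v`. A mistake pays for
its whole dual load `Σ_{v ∈ e} β_{e,v} ≤ w_e`, and in any other edge every pair is covered, so the
total load is at most the cost of `σ` plus the load on covered pairs (`load_le_cost_add_covered`).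
Grouping covered pairs by vertex and color bounds their load by `Σ_v |σ v| α_v`
(`covered_load_le`). Finally `Σ_v |σ v| α_v = Σ_v α_v + Σ_v (|σ v| - 1) α_v`, where the last sum is
at most `λ b` because `α_v ≤ λ`, each `|σ v| - 1` is nonnegative, and these excesses add up to at
most `b` (`sum_card_mul_le`).
-/

theorem load_le_cost_add_covered {V E C : Type*} [Fintype E] [DecidableEq C]
    (ed : E → Finset V) (w : E → ℝ) (col : E → C) (β : E → V → ℝ)
    (hβ : ∀ e, ∀ v ∈ ed e, 0 ≤ β e v)
    (hdual2 : ∀ e, ∑ v ∈ ed e, β e v ≤ w e) (σ : V → Finset C) :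
    ∑ e, ∑ v ∈ ed e, β e v ≤
      ∑ e ∈ Finset.univ.filter (fun e => ∃ v ∈ ed e, col e ∉ σ v), w e +
        ∑ e, ∑ v ∈ ed e, (if col e ∈ σ v then β e v else 0) := by
  rw [Finset.sum_filter, ← Finset.sum_add_distrib]
  refine Finset.sum_le_sum fun e _ => ?_
  split_ifs with h
  · have : 0 ≤ ∑ v ∈ ed e, (if col e ∈ σ v then β e v else 0) :=
      Finset.sum_nonneg fun v hv => by
        split_ifs
        · exact hβ e v hv
        · exact le_rfl
    linarith [hdual2 e]
  · push Not at h
    rw [zero_add]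
    exact Finset.sum_le_sum fun v hv => by rw [if_pos (h v hv)]

theorem covered_load_le {V E C : Type*} [Fintype V] [Fintype E]
    [DecidableEq V] [DecidableEq C]
    (ed : E → Finset V) (col : E → C) (α : V → ℝ) (β : E → V → ℝ)
    (hdual1 : ∀ (v : V) (c : C),
      ∑ e ∈ Finset.univ.filter (fun e => v ∈ ed e ∧ col e = c), β e v ≤ α v)
    (σ : V → Finset C) :
    ∑ e, ∑ v ∈ ed e, (if col e ∈ σ v then β e v else 0) ≤ ∑ v, ((σ v).card : ℝ) * α v := by
  have swap : ∑ e, ∑ v ∈ ed e, (if col e ∈ σ v then β e v else 0) =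
      ∑ v, ∑ c ∈ σ v, ∑ e ∈ Finset.univ.filter (fun e => v ∈ ed e ∧ col e = c), β e v := by
    have h1 : ∀ e, ∑ v ∈ ed e, (if col e ∈ σ v then β e v else 0) =
        ∑ v, if v ∈ ed e then (if col e ∈ σ v then β e v else 0) else 0 := fun e => by
      rw [Finset.sum_ite_mem, Finset.univ_inter]
    simp_rw [h1]
    rw [Finset.sum_comm]
    refine Finset.sum_congr rfl fun v _ => ?_
    simp_rw [Finset.sum_filter]
    rw [Finset.sum_comm]
    refine Finset.sum_congr rfl fun e _ => ?_
    by_cases hv : v ∈ ed e <;> simp [hv]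
  rw [swap]
  refine Finset.sum_le_sum fun v _ => ?_
  rw [← nsmul_eq_mul]
  exact Finset.sum_le_card_nsmul _ _ _ fun c _ => hdual1 v c

theorem sum_card_mul_le {V C : Type*} [Fintype V] (b : ℕ) (α : V → ℝ) (lam : ℝ)
    (hlam : 0 ≤ lam) (hdual3 : ∀ v, α v ≤ lam) (σ : V → Finset C)
    (hσ1 : ∀ v, 1 ≤ (σ v).card) (hσ2 : ∑ v, (σ v).card ≤ Fintype.card V + b) :
    ∑ v, ((σ v).card : ℝ) * α v ≤ ∑ v, α v + lam * b := by
  have hsum : ∑ v, (((σ v).card : ℝ) - 1) ≤ b := by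
    have h : (∑ v, ((σ v).card : ℝ)) ≤ Fintype.card V + b := by exact_mod_cast hσ2
    rw [Finset.sum_sub_distrib]
    simp only [Finset.sum_const, Finset.card_univ, nsmul_eq_mul, mul_one]
    linarith
  calc ∑ v, ((σ v).card : ℝ) * α v
      ≤ ∑ v, (α v + lam * (((σ v).card : ℝ) - 1)) := Finset.sum_le_sum fun v _ => by
        have h : (1 : ℝ) ≤ (σ v).card := by exact_mod_cast hσ1 v
        nlinarith [mul_le_mul_of_nonneg_right (hdual3 v) (sub_nonneg.2 h)]
    _ = ∑ v, α v + lam * ∑ v, (((σ v).card : ℝ) - 1) := by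
        rw [Finset.sum_add_distrib, Finset.mul_sum]
    _ ≤ ∑ v, α v + lam * b := by gcongr

/-- Weak LP duality bound for Global ECC: any dual feasible triple
`(α, β, λ)` gives a lower bound `Σ_{e,v∈e} β_{e,v} − Σ_v α_v − λ·b` on the cost of every
feasible multi-coloring `σ` (with `|σ v| ≥ 1` and `Σ_v |σ v| ≤ |V| + b`). -/
theorem global_ecc_weak_duality
    {V E C : Type*} [Fintype V] [Fintype E] [Fintype C]
    [DecidableEq V] [DecidableEq C]
    (ed : E → Finset V) (w : E → ℝ) (col : E → C)
    (hw : ∀ e, 0 ≤ w e)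
    (b : ℕ)
    (α : V → ℝ) (β : E → V → ℝ) (lam : ℝ)
    (hα : ∀ v, 0 ≤ α v)
    (hβ : ∀ e, ∀ v ∈ ed e, 0 ≤ β e v)
    (hlam : 0 ≤ lam)
    (hdual1 : ∀ (v : V) (c : C),
      ∑ e ∈ Finset.univ.filter (fun e => v ∈ ed e ∧ col e = c), β e v ≤ α v)
    (hdual2 : ∀ e, ∑ v ∈ ed e, β e v ≤ w e)
    (hdual3 : ∀ v, α v ≤ lam)
    (σ : V → Finset C)
    (hσ1 : ∀ v, 1 ≤ (σ v).card)
    (hσ2 : ∑ v, (σ v).card ≤ Fintype.card V + b) :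
    ∑ e ∈ Finset.univ.filter (fun e => ∃ v ∈ ed e, col e ∉ σ v), w e ≥
      ∑ e, ∑ v ∈ ed e, β e v - ∑ v, α v - lam * b := by
  have h1 := load_le_cost_add_covered ed w col β hβ hdual2 σ
  have h2 := covered_load_le ed col α β hdual1 σ
  have h3 := sum_card_mul_le b α lam hlam hdual3 σ hσ1 hσ2
  linarith
end

section
/- Let H be an edge-colored weighted hypergraph and b ∈ ℤ_{≥0} a global budget. Suppose (α, β, λ) is dual feasible for Global ECC and α_v ≤ (1/2) · Σ_{e ∈ δ(v)} β_{e,v} for every v ∈ V. Let σ be a multi-coloring feasible for Global ECC such that every edge that is a mistake under σ is tight, and suppose there exist a set R' ⊆ V and integers k_v ≥ 2 (v ∈ R') such that Σ_{v ∈ R'} (k_v − 1) ≥ b + 1, and for every v ∈ R' both α_v = λ and α_v ≤ (1/k_v) · Σ_{e ∈ δ(v)} β_{e,v} hold. Then the cost of σ is at most 2(b+1) times the cost of σ', for every multi-coloring σ' feasible for Global ECC. (Performance guarantee of the primal-dual 2(b+1)-approximation algorithm for Global ECC.) -/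
/-!
Write `B v` for the sum of `β e v` over the edges `e` containing `v`, and `S` for the total of all
`B v`. Mistakes of `σ` are tight, so `σ` costs at most `S`. Weak duality
(`sum_le_sum_mistakes_add`) says that any feasible `σ'` costs at least `S - ∑ v, α v - b * lam`.
Put `T = ∑ v, (B v - α v)`. The condition `α v ≤ B v / 2` gives `S ≤ 2 * T`. On `R'` one has
`B v - α v ≥ (k v - 1) * lam`, so `T ≥ (b + 1) * lam`, and therefore
`T - b * lam ≥ T / (b + 1) ≥ S / (2 * (b + 1))`.
-/

/-- Double counting of the incidences `v ∈ ed e`. -/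
lemma sum_incidence_comm {V E : Type*} [Fintype V] [Fintype E] [DecidableEq V]
    (ed : E → Finset V) (β : E → V → ℝ) :
    ∑ v, ∑ e ∈ Finset.univ.filter (fun e => v ∈ ed e), β e v = ∑ e, ∑ v ∈ ed e, β e v :=
  Finset.sum_comm' (by simp)

/-- Weak duality: the edges satisfied by a multi-coloring `τ` pay at most `|τ v| * α v` at each
vertex `v`, which is at most `∑ v, α v + b * lam` in total by the budget; the remaining edges are
mistakes and pay at most their weight. -/
lemma sum_le_sum_mistakes_add
    {V E C : Type*} [Fintype V] [Fintype E] [DecidableEq V] [DecidableEq C]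
    (ed : E → Finset V) (w : E → ℝ) (col : E → C) (b : ℕ)
    (α : V → ℝ) (β : E → V → ℝ) (lam : ℝ)
    (hβ : ∀ e, ∀ v ∈ ed e, 0 ≤ β e v) (hlam : 0 ≤ lam)
    (hdual1 : ∀ (v : V) (c : C),
      ∑ e ∈ Finset.univ.filter (fun e => v ∈ ed e ∧ col e = c), β e v ≤ α v)
    (hdual2 : ∀ e, ∑ v ∈ ed e, β e v ≤ w e)
    (hdual3 : ∀ v, α v ≤ lam)
    (τ : V → Finset C) (hτ1 : ∀ v, 1 ≤ (τ v).card)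
    (hτ2 : ∑ v, (τ v).card ≤ Fintype.card V + b) :
    ∑ e, ∑ v ∈ ed e, β e v ≤
      ∑ e ∈ Finset.univ.filter (fun e => ∃ v ∈ ed e, col e ∉ τ v), w e
        + (∑ v, α v + b * lam) := by
  have hvertex : ∀ v, ∑ e ∈ Finset.univ.filter (fun e => v ∈ ed e ∧ col e ∈ τ v), β e v
      ≤ α v + ((τ v).card - 1 : ℝ) * lam := by
    intro v
    have hfiber : ∑ e ∈ Finset.univ.filter (fun e => v ∈ ed e ∧ col e ∈ τ v), β e v
        = ∑ c ∈ τ v, ∑ e ∈ Finset.univ.filter (fun e => v ∈ ed e ∧ col e = c), β e v := by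
      rw [← Finset.sum_fiberwise_of_maps_to (t := τ v) (g := col) (by simp)]
      refine Finset.sum_congr rfl fun c hc => Finset.sum_congr ?_ fun _ _ => rfl
      ext e
      simp only [Finset.mem_filter, Finset.mem_univ, true_and]
      constructor
      · rintro ⟨⟨h1, -⟩, h2⟩
        exact ⟨h1, h2⟩
      · rintro ⟨h1, rfl⟩
        exact ⟨⟨h1, hc⟩, rfl⟩
    have hcard : ∑ c ∈ τ v, ∑ e ∈ Finset.univ.filter (fun e => v ∈ ed e ∧ col e = c), β e v
        ≤ (τ v).card * α v := by
      have := Finset.sum_le_card_nsmul (τ v) _ (α v) (fun c _ => hdual1 v c)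
      simpa [nsmul_eq_mul] using this
    have h1 : (1 : ℝ) ≤ (τ v).card := by exact_mod_cast hτ1 v
    rw [hfiber]
    nlinarith [mul_le_mul_of_nonneg_left (hdual3 v) (sub_nonneg.2 h1)]
  have hbudget : ∑ v, ((τ v).card - 1 : ℝ) ≤ b := by
    have h : (∑ v, ((τ v).card : ℝ)) ≤ Fintype.card V + b := by exact_mod_cast hτ2
    simp only [Finset.sum_sub_distrib, Finset.sum_const, Finset.card_univ, nsmul_eq_mul, mul_one]
    linarith
  have hsat : ∑ e ∈ Finset.univ.filter (fun e => ¬ ∃ v ∈ ed e, col e ∉ τ v), ∑ v ∈ ed e, β e v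
      ≤ ∑ v, α v + b * lam := by
    calc _ ≤ ∑ v, ∑ e ∈ Finset.univ.filter (fun e => v ∈ ed e ∧ col e ∈ τ v), β e v := by
          rw [Finset.sum_comm' (t' := Finset.univ) (s' := fun v => Finset.univ.filter
            (fun e => (¬ ∃ v ∈ ed e, col e ∉ τ v) ∧ v ∈ ed e)) (by simp)]
          refine Finset.sum_le_sum fun v _ => Finset.sum_le_sum_of_subset_of_nonneg ?_ ?_
          · intro e he
            simp only [Finset.mem_filter, Finset.mem_univ, true_and] at he ⊢
            push Not at he
            exact ⟨he.2, he.1 v he.2⟩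
          · intro e he _
            exact hβ e v (Finset.mem_filter.1 he).2.1
      _ ≤ ∑ v, (α v + ((τ v).card - 1 : ℝ) * lam) := Finset.sum_le_sum fun v _ => hvertex v
      _ = ∑ v, α v + (∑ v, ((τ v).card - 1 : ℝ)) * lam := by
          rw [Finset.sum_add_distrib, Finset.sum_mul]
      _ ≤ _ := by gcongr
  rw [← Finset.sum_filter_add_sum_filter_not Finset.univ (fun e => ∃ v ∈ ed e, col e ∉ τ v)]
  exact add_le_add (Finset.sum_le_sum fun e _ => hdual2 e) hsat


/-- Performance guarantee of the primal-dual `2(b+1)`-approximation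
algorithm for Global ECC: if `(α, β, λ)` is dual feasible, `α_v ≤ (1/2) Σ_{e ∈ δ(v)} β_{e,v}`
for every `v`, `σ` is feasible for Global ECC with all its mistakes tight, and there exist
`R' ⊆ V` and integers `k_v ≥ 2` (`v ∈ R'`) with `Σ_{v ∈ R'} (k_v − 1) ≥ b + 1` such that
`α_v = λ` and `α_v ≤ (1/k_v) Σ_{e ∈ δ(v)} β_{e,v}` for every `v ∈ R'`, then the cost of
`σ` is at most `2(b+1)` times the cost of every feasible `σ'`. -/
theorem global_ecc_primal_dual_guarantee
    {V E C : Type*} [Fintype V] [Fintype E] [Fintype C]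
    [DecidableEq V] [DecidableEq C]
    (ed : E → Finset V) (w : E → ℝ) (col : E → C)
    (hw : ∀ e, 0 ≤ w e)
    (b : ℕ)
    (α : V → ℝ) (β : E → V → ℝ) (lam : ℝ)
    (hα : ∀ v, 0 ≤ α v)
    (hβ : ∀ e, ∀ v ∈ ed e, 0 ≤ β e v)
    (hlam : 0 ≤ lam)
    (hdual1 : ∀ (v : V) (c : C),
      ∑ e ∈ Finset.univ.filter (fun e => v ∈ ed e ∧ col e = c), β e v ≤ α v)
    (hdual2 : ∀ e, ∑ v ∈ ed e, β e v ≤ w e)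
    (hdual3 : ∀ v, α v ≤ lam)
    (hhalf : ∀ v, α v ≤ (1 / 2) *
      ∑ e ∈ Finset.univ.filter (fun e => v ∈ ed e), β e v)
    (σ : V → Finset C)
    (hσ1 : ∀ v, 1 ≤ (σ v).card)
    (hσ2 : ∑ v, (σ v).card ≤ Fintype.card V + b)
    (htight : ∀ e, (∃ v ∈ ed e, col e ∉ σ v) → ∑ v ∈ ed e, β e v = w e)
    (R' : Finset V) (kk : V → ℕ)
    (hkk : ∀ v ∈ R', 2 ≤ kk v)
    (hksum : b + 1 ≤ ∑ v ∈ R', (kk v - 1))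
    (hR' : ∀ v ∈ R', α v = lam ∧ α v ≤ (1 / (kk v : ℝ)) *
      ∑ e ∈ Finset.univ.filter (fun e => v ∈ ed e), β e v) :
    ∀ σ' : V → Finset C, (∀ v, 1 ≤ (σ' v).card) →
      (∑ v, (σ' v).card ≤ Fintype.card V + b) →
      ∑ e ∈ Finset.univ.filter (fun e => ∃ v ∈ ed e, col e ∉ σ v), w e ≤
        2 * ((b : ℝ) + 1) *
          ∑ e ∈ Finset.univ.filter (fun e => ∃ v ∈ ed e, col e ∉ σ' v), w e := by
  intro σ' hσ'1 hσ'2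
  have hweak := sum_le_sum_mistakes_add ed w col b α β lam hβ hlam hdual1 hdual2 hdual3
    σ' hσ'1 hσ'2
  have hALG : ∑ e ∈ Finset.univ.filter (fun e => ∃ v ∈ ed e, col e ∉ σ v), w e
      ≤ ∑ e, ∑ v ∈ ed e, β e v := by
    rw [← Finset.sum_congr rfl fun e he => htight e (Finset.mem_filter.1 he).2]
    exact Finset.sum_le_sum_of_subset_of_nonneg (Finset.subset_univ _)
      fun e _ _ => Finset.sum_nonneg (hβ e)
  rw [← sum_incidence_comm] at hweak hALG
  set B : V → ℝ := fun v => ∑ e ∈ Finset.univ.filter (fun e => v ∈ ed e), β e v with hB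
  change ∑ v, B v ≤ _ at hweak
  change _ ≤ ∑ v, B v at hALG
  have hS : ∑ v, α v ≤ (1 / 2) * ∑ v, B v := by
    rw [Finset.mul_sum]
    exact Finset.sum_le_sum fun v _ => hhalf v
  have hT : ((b : ℝ) + 1) * lam ≤ ∑ v, (B v - α v) := by
    calc ((b : ℝ) + 1) * lam ≤ ((∑ v ∈ R', (kk v - 1) : ℕ) : ℝ) * lam := by
          gcongr
          exact_mod_cast hksum
      _ = ∑ v ∈ R', ((kk v - 1 : ℕ) : ℝ) * lam := by rw [Nat.cast_sum, Finset.sum_mul]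
      _ ≤ ∑ v ∈ R', (B v - α v) := by
          refine Finset.sum_le_sum fun v hv => ?_
          obtain ⟨h1, h2⟩ := hR' v hv
          have hk := hkk v hv
          have hk0 : (0 : ℝ) < kk v := by exact_mod_cast (by omega : 0 < kk v)
          change α v ≤ 1 / (kk v : ℝ) * B v at h2
          rw [one_div, inv_mul_eq_div, le_div_iff₀ hk0] at h2
          rw [Nat.cast_sub (by omega)]
          rw [h1] at h2 ⊢
          push_cast
          linarith
      _ ≤ ∑ v, (B v - α v) := by
          refine Finset.sum_le_sum_of_subset_of_nonneg (Finset.subset_univ _) fun v _ _ => ?_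
          have h1 : α v ≤ 1 / 2 * B v := hhalf v
          linarith [hα v]
  rw [Finset.sum_sub_distrib] at hT
  have hb : (0 : ℝ) ≤ b := Nat.cast_nonneg b
  -- `S ≤ 2 T ≤ 2 (b + 1) (T - b lam)`; the second step is `b` times `hT`.
  have h1 := mul_le_mul_of_nonneg_left hT hb
  have h2 := mul_le_mul_of_nonneg_left hweak (by linarith : (0 : ℝ) ≤ 2 * (b + 1))
  linarith
end

section
/- In the instance TwoEdge(b), for every multi-coloring σ with |σ(v)| ≥ 1 for all v ∈ V and Σ_{v ∈ V} |σ(v)| ≤ |V| + b = 2b + 1, at least one of the two edges is a mistake under σ; hence every feasible solution to Global ECC with budget b on TwoEdge(b) has cost at least 1. -/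
/-- In the gap instance `TwoEdge(b)`, every multi-coloring `σ` with
`|σ v| ≥ 1` for all `v` and `Σ_v |σ v| ≤ |V| + b = 2b + 1` makes a mistake on at least
one of the two edges; hence every feasible Global ECC solution has cost at least `1`. -/
theorem twoedge_global_integral_lower_bound
    {V C : Type*} [Fintype V] [DecidableEq C]
    (b : ℕ) (hV : Fintype.card V = b + 1)
    (c1 c2 : C) (hne : c1 ≠ c2)
    (σ : V → Finset C)
    (hσ1 : ∀ v, 1 ≤ (σ v).card)
    (hσ2 : ∑ v, (σ v).card ≤ Fintype.card V + b) :
    ((∃ v, c1 ∉ σ v) ∨ (∃ v, c2 ∉ σ v)) ∧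
    (1 : ℝ) ≤ (if ∃ v, c1 ∉ σ v then 1 else 0) +
              (if ∃ v, c2 ∉ σ v then 1 else 0) := by
  have key : (∃ v, c1 ∉ σ v) ∨ (∃ v, c2 ∉ σ v) := by
    by_contra! h
    -- With no mistake every vertex carries both colors, so at least `2 * (b + 1)` colors
    -- are used in total, one more than the `2 * b + 1` allowed.
    have two_le : ∀ v ∈ Finset.univ, 2 ≤ (σ v).card := fun v _ =>
      Finset.one_lt_card.mpr ⟨c1, h.1 v, c2, h.2 v, hne⟩
    have hsum := Finset.card_nsmul_le_sum Finset.univ (fun v => (σ v).card) 2 two_le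
    rw [Finset.card_univ, smul_eq_mul] at hsum
    omega
  refine ⟨key, ?_⟩
  rcases key with h | h
  · rw [if_pos h]
    split_ifs <;> norm_num
  · rw [if_pos h]
    split_ifs <;> norm_num
end

section
/- For every integer b ≥ 0, the instance TwoEdge(b) witnesses that the integrality gap of the Global ECC LP is at least b+1: the assignment z_v := b/(b+1) for all v ∈ V, x_{v,c_{e_1}} = x_{v,c_{e_2}} := (2b+1)/(2(b+1)) (and x_{v,c} := 0 for all other colors c), and y_{e_1} = y_{e_2} := 1/(2(b+1)) is feasible for the Global ECC LP with budget b and has objective value 1/(b+1), while every multi-coloring σ with |σ(v)| ≥ 1 for all v and Σ_{v ∈ V} |σ(v)| ≤ |V| + b has cost at least 1. -/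
/-! Feasibility of the fractional point is arithmetic in `b`: the two nonzero `x`-values sum to
`(2b+1)/(b+1) = b/(b+1) + 1`, so the color constraints hold with equality. For the integral bound,
a multi-coloring of cost `0` puts both colors on each of the `b+1` vertices, hence uses at least
`2(b+1)` assignments, one more than the `(b+1) + b` that the budget allows. -/

/-- Integrality gap of the Global ECC LP: on `TwoEdge(b)`, the fractional
assignment `z_v = b/(b+1)`, `x_{v,c1} = x_{v,c2} = (2b+1)/(2(b+1))` (and `0` on other
colors), `y_{e1} = y_{e2} = 1/(2(b+1))` is feasible for the Global ECC LP with budget `b`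
and has objective value `1/(b+1)`, while every feasible multi-coloring has cost at least
`1`; hence the integrality gap is at least `b+1`. -/
theorem twoedge_global_integrality_gap
    {V C : Type*} [Fintype V] [Fintype C] [DecidableEq C]
    (b : ℕ) (hV : Fintype.card V = b + 1)
    (c1 c2 : C) (hne : c1 ≠ c2) :
    -- nonnegativity of z, x, y
    ((0 : ℝ) ≤ (b : ℝ) / ((b : ℝ) + 1)) ∧
    (∀ c : C, (0 : ℝ) ≤
      (if c = c1 ∨ c = c2 then (2 * (b : ℝ) + 1) / (2 * ((b : ℝ) + 1)) else 0)) ∧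
    ((0 : ℝ) ≤ 1 / (2 * ((b : ℝ) + 1))) ∧
    -- Σ_c x_{v,c} ≤ z_v + 1 for all v
    (∀ _v : V,
      ∑ c : C, (if c = c1 ∨ c = c2 then (2 * (b : ℝ) + 1) / (2 * ((b : ℝ) + 1)) else 0)
        ≤ (b : ℝ) / ((b : ℝ) + 1) + 1) ∧
    -- x_{v,c_e} + y_e ≥ 1 for both edges and all v ∈ e
    (∀ _v : V,
      (if c1 = c1 ∨ c1 = c2 then (2 * (b : ℝ) + 1) / (2 * ((b : ℝ) + 1)) else 0) +
        1 / (2 * ((b : ℝ) + 1)) ≥ 1) ∧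
    (∀ _v : V,
      (if c2 = c1 ∨ c2 = c2 then (2 * (b : ℝ) + 1) / (2 * ((b : ℝ) + 1)) else 0) +
        1 / (2 * ((b : ℝ) + 1)) ≥ 1) ∧
    -- Σ_v z_v ≤ b
    (∑ _v : V, (b : ℝ) / ((b : ℝ) + 1) ≤ (b : ℝ)) ∧
    -- objective value equals 1/(b+1)
    ((1 : ℝ) * (1 / (2 * ((b : ℝ) + 1))) + 1 * (1 / (2 * ((b : ℝ) + 1)))
      = 1 / ((b : ℝ) + 1)) ∧
    -- every feasible multi-coloring has cost at least 1
    (∀ σ : V → Finset C, (∀ v, 1 ≤ (σ v).card) →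
      (∑ v, (σ v).card ≤ Fintype.card V + b) →
      (1 : ℝ) ≤ (if ∃ v, c1 ∉ σ v then 1 else 0) +
                (if ∃ v, c2 ∉ σ v then 1 else 0)) := by
  have hb : (0 : ℝ) < (b : ℝ) + 1 := by positivity
  have hxy : (2 * (b : ℝ) + 1) / (2 * ((b : ℝ) + 1)) + 1 / (2 * ((b : ℝ) + 1)) = 1 := by
    field_simp
    ring
  refine ⟨by positivity, fun c => by split_ifs <;> positivity, by positivity, fun _ => ?_,
    fun _ => ?_, fun _ => ?_, ?_, ?_, fun σ _ hσ => ?_⟩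
  · have hfilter : (Finset.univ.filter fun c : C => c = c1 ∨ c = c2) = {c1, c2} := by
      ext c
      simp
    rw [← Finset.sum_filter, hfilter, Finset.sum_pair hne]
    apply le_of_eq
    field_simp
    ring
  · rw [if_pos (Or.inl rfl)]
    exact hxy.ge
  · rw [if_pos (Or.inr rfl)]
    exact hxy.ge
  · rw [Finset.sum_const, Finset.card_univ, hV, nsmul_eq_mul]
    push_cast
    exact (mul_div_cancel₀ _ hb.ne').le
  · field_simp
    norm_num
  · have hmistake : (∃ v, c1 ∉ σ v) ∨ (∃ v, c2 ∉ σ v) := by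
      by_contra! h
      have htwo : ∀ v ∈ Finset.univ, 2 ≤ (σ v).card := fun v _ =>
        Finset.one_lt_card.mpr ⟨c1, h.1 v, c2, h.2 v, hne⟩
      have hsum := Finset.card_nsmul_le_sum Finset.univ (fun v => (σ v).card) 2 htwo
      rw [Finset.card_univ, smul_eq_mul] at hsum
      omega
    rcases hmistake with h | h
    · rw [if_pos h]
      split_ifs <;> norm_num
    · rw [if_pos h]
      split_ifs <;> norm_num
end

section
/- Let H be an edge-colored weighted hypergraph, let b ∈ ℤ_{≥1} be a global budget, and let τ ∈ ℤ_{≥0}. Suppose (α, β, λ) is dual feasible for Global ECC and α_v ≤ (1/2) · Σ_{e ∈ δ(v)} β_{e,v} for every v ∈ V. Let σ be a multi-coloring with |σ(v)| ≥ 1 for all v ∈ V and Σ_{v ∈ V} |σ(v)| ≤ |V| + b + τ such that every edge that is a mistake under σ is tight, and suppose there exist a set R' ⊆ V and integers k_v ≥ 2 (v ∈ R') such that Σ_{v ∈ R'} (k_v − 1) ≥ b + τ + 1, and for every v ∈ R' both α_v = λ and α_v ≤ (1/k_v) · Σ_{e ∈ δ(v)} β_{e,v} hold. Then the cost of σ is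 at most (2 + 2b/(τ+1)) times the cost of σ', for every multi-coloring σ' with |σ'(v)| ≥ 1 for all v ∈ V and Σ_{v ∈ V} |σ'(v)| ≤ |V| + b. (Bicriteria guarantee for Global ECC: with τ = ⌈2b/ε⌉ − 1 this yields a (2+ε, 1 + (1/b)⌈2b/ε⌉ − 1/b)-approximation, answering an open question of Crane et al.) -/
/-!
Write `B v = ∑_{e ∋ v} β e v`. Mistakes of `σ` are tight, so double counting gives
`cost σ ≤ ∑ v, B v`.

Any edge through `v` whose colour is missing from `σ' v` is a mistake of `σ'`, and the edges at `v`
of a single colour carry at most `α v` of `B v`, so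
`cost σ' ≥ ∑ v, (B v - |σ' v| α v) ≥ S - b λ`, where `S = ∑ v, (B v - α v)`
(`sub_budget_le_cost`).

The half-bound gives `∑ v, B v ≤ 2 S`. On `R'` one has `B v - α v ≥ (k v - 1) λ`, hence
`S ≥ (b + τ + 1) λ`. Therefore `S - b λ ≥ (τ + 1) / (b + τ + 1) * S`, and
`cost σ ≤ 2 S ≤ 2 (b + τ + 1) / (τ + 1) * cost σ'`, whose coefficient equals
`2 + 2 b / (τ + 1)`.
-/

section

variable {V E C : Type*} [Fintype V] [Fintype E] [DecidableEq V] [DecidableEq C]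

/-- Tightness of the mistakes bounds the cost of `σ` by the total dual mass. -/
lemma cost_le_sum_of_tight (ed : E → Finset V) (w : E → ℝ) (col : E → C) (β : E → V → ℝ)
    (hβ : ∀ e, ∀ v ∈ ed e, 0 ≤ β e v) (σ : V → Finset C)
    (htight : ∀ e, (∃ v ∈ ed e, col e ∉ σ v) → ∑ v ∈ ed e, β e v = w e) :
    ∑ e ∈ Finset.univ.filter (fun e => ∃ v ∈ ed e, col e ∉ σ v), w e ≤
      ∑ v, ∑ e ∈ Finset.univ.filter (fun e => v ∈ ed e), β e v := by
  calc ∑ e ∈ Finset.univ.filter (fun e => ∃ v ∈ ed e, col e ∉ σ v), w e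
      = ∑ e ∈ Finset.univ.filter (fun e => ∃ v ∈ ed e, col e ∉ σ v), ∑ v ∈ ed e, β e v :=
        Finset.sum_congr rfl fun e he => (htight e (Finset.mem_filter.1 he).2).symm
    _ ≤ ∑ e, ∑ v ∈ ed e, β e v :=
        Finset.sum_le_sum_of_subset_of_nonneg (Finset.filter_subset _ _)
          fun e _ _ => Finset.sum_nonneg (hβ e)
    _ = _ := Finset.sum_comm' (by simp)

/-- The dual mass at `v` on edges whose colour lies in `A` is at most `|A| α v`. -/
lemma sub_card_mul_le (ed : E → Finset V) (col : E → C) (α : V → ℝ) (β : E → V → ℝ)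
    (hdual1 : ∀ (v : V) (c : C),
      ∑ e ∈ Finset.univ.filter (fun e => v ∈ ed e ∧ col e = c), β e v ≤ α v)
    (v : V) (A : Finset C) :
    ∑ e ∈ Finset.univ.filter (fun e => v ∈ ed e), β e v - (A.card : ℝ) * α v ≤
      ∑ e ∈ Finset.univ.filter (fun e => v ∈ ed e ∧ col e ∉ A), β e v := by
  have hin : ∑ e ∈ Finset.univ.filter (fun e => v ∈ ed e ∧ col e ∈ A), β e v ≤
      (A.card : ℝ) * α v := by
    calc ∑ e ∈ Finset.univ.filter (fun e => v ∈ ed e ∧ col e ∈ A), β e v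
        = ∑ c ∈ A, ∑ e ∈ Finset.univ.filter (fun e => v ∈ ed e ∧ col e = c), β e v := by
          refine (Finset.sum_fiberwise_of_maps_to (g := col) (t := A) ?_ _).symm.trans ?_
          · intro e he
            exact (Finset.mem_filter.1 he).2.2
          · refine Finset.sum_congr rfl fun c hc => Finset.sum_congr ?_ fun _ _ => rfl
            ext e
            simp only [Finset.mem_filter, Finset.mem_univ, true_and]
            constructor
            · rintro ⟨⟨h1, -⟩, h2⟩
              exact ⟨h1, h2⟩
            · rintro ⟨h1, rfl⟩
              exact ⟨⟨h1, hc⟩, rfl⟩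
      _ ≤ ∑ _c ∈ A, α v := Finset.sum_le_sum fun c _ => hdual1 v c
      _ = (A.card : ℝ) * α v := by rw [Finset.sum_const, nsmul_eq_mul]
  have hsplit := Finset.sum_filter_add_sum_filter_not
    (Finset.univ.filter (fun e => v ∈ ed e)) (fun e => col e ∈ A) (fun e => β e v)
  rw [Finset.filter_filter, Finset.filter_filter] at hsplit
  linarith

/-- Weak duality: the mass at each `v` on colours missing from `σ' v` is paid for by mistakes. -/
lemma sum_missing_le_cost (ed : E → Finset V) (w : E → ℝ) (col : E → C) (β : E → V → ℝ)
    (hβ : ∀ e, ∀ v ∈ ed e, 0 ≤ β e v)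
    (hdual2 : ∀ e, ∑ v ∈ ed e, β e v ≤ w e) (σ' : V → Finset C) :
    ∑ v, ∑ e ∈ Finset.univ.filter (fun e => v ∈ ed e ∧ col e ∉ σ' v), β e v ≤
      ∑ e ∈ Finset.univ.filter (fun e => ∃ v ∈ ed e, col e ∉ σ' v), w e := by
  calc ∑ v, ∑ e ∈ Finset.univ.filter (fun e => v ∈ ed e ∧ col e ∉ σ' v), β e v
      = ∑ e ∈ Finset.univ.filter (fun e => ∃ v ∈ ed e, col e ∉ σ' v),
          ∑ v ∈ (ed e).filter (fun v => col e ∉ σ' v), β e v := by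
        refine Finset.sum_comm' fun v e => ?_
        simp only [Finset.mem_filter, Finset.mem_univ, true_and]
        exact ⟨fun h => ⟨h, v, h⟩, fun h => h.1⟩
    _ ≤ _ := Finset.sum_le_sum fun e _ =>
        (Finset.sum_le_sum_of_subset_of_nonneg (Finset.filter_subset _ _)
          fun v hv _ => hβ e v hv).trans (hdual2 e)

/-- The lower bound `S - b λ` on the cost of a colouring within budget `b`. -/
lemma sub_budget_le_cost (ed : E → Finset V) (w : E → ℝ) (col : E → C) (b : ℕ)
    (α : V → ℝ) (β : E → V → ℝ) (lam : ℝ)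
    (hβ : ∀ e, ∀ v ∈ ed e, 0 ≤ β e v) (hlam : 0 ≤ lam)
    (hdual1 : ∀ (v : V) (c : C),
      ∑ e ∈ Finset.univ.filter (fun e => v ∈ ed e ∧ col e = c), β e v ≤ α v)
    (hdual2 : ∀ e, ∑ v ∈ ed e, β e v ≤ w e) (hdual3 : ∀ v, α v ≤ lam)
    (σ' : V → Finset C) (h1 : ∀ v, 1 ≤ (σ' v).card)
    (h2 : ∑ v, (σ' v).card ≤ Fintype.card V + b) :
    ∑ v, (∑ e ∈ Finset.univ.filter (fun e => v ∈ ed e), β e v - α v) - b * lam ≤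
      ∑ e ∈ Finset.univ.filter (fun e => ∃ v ∈ ed e, col e ∉ σ' v), w e := by
  refine le_trans ?_ (sum_missing_le_cost ed w col β hβ hdual2 σ')
  have hext : ∑ v, (((σ' v).card : ℝ) - 1) * lam ≤ b * lam := by
    rw [← Finset.sum_mul]
    refine mul_le_mul_of_nonneg_right ?_ hlam
    have h2' : ∑ v, ((σ' v).card : ℝ) ≤ (Fintype.card V : ℝ) + b := by exact_mod_cast h2
    rw [Finset.sum_sub_distrib, Finset.sum_const, Finset.card_univ, nsmul_eq_mul, mul_one]
    linarith
  calc _ ≤ ∑ v, (∑ e ∈ Finset.univ.filter (fun e => v ∈ ed e), β e v - α v) -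
        ∑ v, (((σ' v).card : ℝ) - 1) * lam := by linarith
    _ = ∑ v, (∑ e ∈ Finset.univ.filter (fun e => v ∈ ed e), β e v - α v -
        (((σ' v).card : ℝ) - 1) * lam) := by rw [← Finset.sum_sub_distrib]
    _ ≤ _ := Finset.sum_le_sum fun v _ => by
        have hc : (1 : ℝ) ≤ (σ' v).card := by exact_mod_cast h1 v
        have := mul_le_mul_of_nonneg_left (hdual3 v) (sub_nonneg.2 hc)
        have := sub_card_mul_le ed col α β hdual1 v (σ' v)
        linarith

end


/-- Bicriteria guarantee for Global ECC: with budget `b ≥ 1` and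
relaxation `τ ≥ 0`, if `(α, β, λ)` is dual feasible, `α_v ≤ (1/2) Σ_{e ∈ δ(v)} β_{e,v}` for
every `v`, `σ` satisfies `|σ v| ≥ 1` and `Σ_v |σ v| ≤ |V| + b + τ` with all its mistakes
tight, and there exist `R' ⊆ V` and integers `k_v ≥ 2` (`v ∈ R'`) with
`Σ_{v ∈ R'} (k_v − 1) ≥ b + τ + 1` such that `α_v = λ` and
`α_v ≤ (1/k_v) Σ_{e ∈ δ(v)} β_{e,v}` for every `v ∈ R'`, then the cost of `σ` is at most
`2 + 2b/(τ+1)` times the cost of every `σ'` with `|σ' v| ≥ 1` and `Σ_v |σ' v| ≤ |V| + b`. -/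
theorem global_ecc_bicriteria_guarantee
    {V E C : Type*} [Fintype V] [Fintype E] [Fintype C]
    [DecidableEq V] [DecidableEq C]
    (ed : E → Finset V) (w : E → ℝ) (col : E → C)
    (hw : ∀ e, 0 ≤ w e)
    (b τ : ℕ) (hb : 1 ≤ b)
    (α : V → ℝ) (β : E → V → ℝ) (lam : ℝ)
    (hα : ∀ v, 0 ≤ α v)
    (hβ : ∀ e, ∀ v ∈ ed e, 0 ≤ β e v)
    (hlam : 0 ≤ lam)
    (hdual1 : ∀ (v : V) (c : C),
      ∑ e ∈ Finset.univ.filter (fun e => v ∈ ed e ∧ col e = c), β e v ≤ α v)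
    (hdual2 : ∀ e, ∑ v ∈ ed e, β e v ≤ w e)
    (hdual3 : ∀ v, α v ≤ lam)
    (hhalf : ∀ v, α v ≤ (1 / 2) *
      ∑ e ∈ Finset.univ.filter (fun e => v ∈ ed e), β e v)
    (σ : V → Finset C)
    (hσ1 : ∀ v, 1 ≤ (σ v).card)
    (hσ2 : ∑ v, (σ v).card ≤ Fintype.card V + b + τ)
    (htight : ∀ e, (∃ v ∈ ed e, col e ∉ σ v) → ∑ v ∈ ed e, β e v = w e)
    (R' : Finset V) (kk : V → ℕ)
    (hkk : ∀ v ∈ R', 2 ≤ kk v)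
    (hksum : b + τ + 1 ≤ ∑ v ∈ R', (kk v - 1))
    (hR' : ∀ v ∈ R', α v = lam ∧ α v ≤ (1 / (kk v : ℝ)) *
      ∑ e ∈ Finset.univ.filter (fun e => v ∈ ed e), β e v) :
    ∀ σ' : V → Finset C, (∀ v, 1 ≤ (σ' v).card) →
      (∑ v, (σ' v).card ≤ Fintype.card V + b) →
      ∑ e ∈ Finset.univ.filter (fun e => ∃ v ∈ ed e, col e ∉ σ v), w e ≤
        (2 + 2 * (b : ℝ) / ((τ : ℝ) + 1)) *
          ∑ e ∈ Finset.univ.filter (fun e => ∃ v ∈ ed e, col e ∉ σ' v), w e := by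
  intro σ' h1 h2
  have hup := cost_le_sum_of_tight ed w col β hβ σ htight
  have hlow := sub_budget_le_cost ed w col b α β lam hβ hlam hdual1 hdual2 hdual3 σ' h1 h2
  set X := ∑ e ∈ Finset.univ.filter (fun e => ∃ v ∈ ed e, col e ∉ σ v), w e
  set Y := ∑ e ∈ Finset.univ.filter (fun e => ∃ v ∈ ed e, col e ∉ σ' v), w e
  set B : V → ℝ := fun v => ∑ e ∈ Finset.univ.filter (fun e => v ∈ ed e), β e v with hB
  change X ≤ ∑ v, B v at hup
  change ∑ v, (B v - α v) - b * lam ≤ Y at hlow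
  have hhalf' : ∀ v, α v ≤ 1 / 2 * B v := hhalf
  have hBS : ∑ v, B v ≤ 2 * ∑ v, (B v - α v) := by
    rw [Finset.mul_sum]
    exact Finset.sum_le_sum fun v _ => by linarith [hhalf' v]
  have hS : ((b : ℝ) + τ + 1) * lam ≤ ∑ v, (B v - α v) := by
    calc ((b : ℝ) + τ + 1) * lam ≤ ((∑ v ∈ R', (kk v - 1) : ℕ) : ℝ) * lam :=
          mul_le_mul_of_nonneg_right (by exact_mod_cast hksum) hlam
      _ = ∑ v ∈ R', ((kk v - 1 : ℕ) : ℝ) * lam := by rw [Nat.cast_sum, Finset.sum_mul]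
      _ ≤ ∑ v ∈ R', (B v - α v) := Finset.sum_le_sum fun v hv => by
          have hk := hkk v hv
          have hkpos : (0 : ℝ) < kk v := by exact_mod_cast (by omega : 0 < kk v)
          obtain ⟨ha, hle⟩ := hR' v hv
          change α v ≤ 1 / (kk v : ℝ) * B v at hle
          rw [one_div_mul_eq_div, le_div_iff₀ hkpos, ha] at hle
          rw [Nat.cast_sub (by omega), Nat.cast_one, ha]
          linarith
      _ ≤ ∑ v, (B v - α v) :=
          Finset.sum_le_sum_of_subset_of_nonneg (Finset.subset_univ _)
            fun v _ _ => by linarith [hhalf' v, hα v]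
  have hτ : (0 : ℝ) < (τ : ℝ) + 1 := by positivity
  have hb0 : (0 : ℝ) ≤ b := Nat.cast_nonneg b
  rw [show (2 + 2 * (b : ℝ) / ((τ : ℝ) + 1)) * Y = 2 * ((b + τ + 1) * Y) / ((τ : ℝ) + 1) by
    field_simp; ring, le_div_iff₀ hτ]
  -- Combine `X ≤ 2 S`, `(b + τ + 1) λ ≤ S` and `S - b λ ≤ Y`, scaled by `τ + 1`, `b`, `b + τ + 1`.
  have e1 := mul_le_mul_of_nonneg_right (hup.trans hBS) hτ.le
  have e2 := mul_le_mul_of_nonneg_left hS hb0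
  have e3 := mul_le_mul_of_nonneg_left hlow (by positivity : (0 : ℝ) ≤ (b : ℝ) + τ + 1)
  nlinarith [e1, e2, e3]
end
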